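/- arXiv:2206.01654 — 2 statements merged into one kernel-verified Lean document; each statement's English description precedes it below -/
import Mathlib

section
/- Let c : Ω → [0,∞] be 𝒜-measurable. Then there exists P ∈ M such that P(c) = inf_{Q ∈ M} Q(c); that is, the Kantorovich infimum over finitely additive couplings is always attained, with no further assumptions on c or on μ_1,…,μ_n. -/
open MeasureTheory Set ENNReal

namespace FATransport

variable {α : Type*} [MeasurableSpace α]

/-- The collection of measurable sets of `α` (the σ-field `𝒜`), as a type. -/
abbrev MSet (α : Type*) [MeasurableSpace α] := {A : Set α // MeasurableSet A}

/-- A finitely additive probability on the σ-field of `α`, viewed as an element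
of `[0,1]^𝒜`: it maps the whole space to `1` and is additive on disjoint pairs. -/
def IsFAP (P : MSet α → unitInterval) : Prop :=
  (P ⟨Set.univ, MeasurableSet.univ⟩ : ℝ) = 1 ∧
    ∀ A B : MSet α, Disjoint A.1 B.1 →
      (P ⟨A.1 ∪ B.1, A.2.union B.2⟩ : ℝ) = (P A : ℝ) + (P B : ℝ)

/-- `ℙ`, the set of all finitely additive probabilities on `𝒜`, as a subset of
`[0,1]^𝒜` (with its product topology). -/
def FAPs (α : Type*) [MeasurableSpace α] : Set (MSet α → unitInterval) :=
  {P | IsFAP P}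

/-- Integral of a simple function with respect to a finitely additive set function. -/
noncomputable def simpleInt (P : MSet α → unitInterval) (s : SimpleFunc α ℝ) : ℝ :=
  ∑ y ∈ s.range, y * (P ⟨(⇑s) ⁻¹' {y}, s.measurableSet_fiber y⟩ : ℝ)

/-- `P(f)` for a bounded measurable `f : α → ℝ`: the supremum of the integrals of
simple functions below `f` (for a f.a.p. `P` and bounded measurable `f` this agrees
with the integral defined by uniform approximation by simple functions). -/
noncomputable def fapInt (P : MSet α → unitInterval) (f : α → ℝ) : ℝ :=
  sSup (simpleInt P '' {s : SimpleFunc α ℝ | ∀ x, s x ≤ f x})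

/-- `P(c) = sup_k P(c ∧ k)` for a `[0,∞]`-valued `c`. -/
noncomputable def fapIntTop (P : MSet α → unitInterval) (c : α → ℝ≥0∞) : ℝ≥0∞ :=
  ⨆ k : ℕ, ENNReal.ofReal (fapInt P (fun x => (c x ⊓ (k : ℝ≥0∞)).toReal))

/-- A real-valued `f` is `P`-integrable iff `P(|f|) < ∞`. -/
def FapIntegrable (P : MSet α → unitInterval) (f : α → ℝ) : Prop :=
  fapIntTop P (fun x => ENNReal.ofReal |f x|) < ⊤

/-- `P(f) = P(f⁺) - P(f⁻)` for a (`P`-integrable) real-valued `f`. -/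
noncomputable def fapIntR (P : MSet α → unitInterval) (f : α → ℝ) : ℝ :=
  (fapIntTop P (fun x => ENNReal.ofReal (f x))).toReal -
    (fapIntTop P (fun x => ENNReal.ofReal (-f x))).toReal

/-- `P ≪ Q` for finitely additive probabilities. -/
def FapAC (P Q : MSet α → unitInterval) : Prop :=
  ∀ A : MSet α, (Q A : ℝ) = 0 → (P A : ℝ) = 0

variable {n : ℕ} {Ω : Fin n → Type*} [∀ i, MeasurableSpace (Ω i)]

/-- `M`, the set of finitely additive probabilities on `𝒜 = ⊗ᵢ 𝒜ᵢ` whose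
`i`-th marginal is `μ i` for every `i`. -/
def couplings (μ : ∀ i, Measure (Ω i)) : Set (MSet (∀ i, Ω i) → unitInterval) :=
  {P | IsFAP P ∧ ∀ (i : Fin n) (B : Set (Ω i)) (hB : MeasurableSet B),
    (P ⟨(fun ω => ω i) ⁻¹' B, (measurable_pi_apply i) hB⟩ : ℝ) = (μ i B).toReal}

end FATransport

namespace FATransport

/-!
`[0,1]^𝒜` is compact by Tychonoff, and being finitely additive with prescribed marginals is a
family of closed conditions on finitely many coordinates each, so the couplings form a compact set;
it contains the product measure. Integrals of simple functions are finite linear combinations of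
coordinates, hence continuous, so `P ↦ P(c)` is a supremum of continuous functions. Being lower
semicontinuous, it attains its infimum on any nonempty compact set.
-/

section FinitelyAdditive

variable {α : Type*} [MeasurableSpace α] {P : MSet α → unitInterval}

theorem IsFAP.apply_empty (hP : IsFAP P) : (P ⟨∅, MeasurableSet.empty⟩ : ℝ) = 0 := by
  have h := hP.2 ⟨∅, MeasurableSet.empty⟩ ⟨∅, MeasurableSet.empty⟩ disjoint_bot_left
  simp only [union_self] at h
  linarith

theorem IsFAP.apply_biUnion_finset (hP : IsFAP P) {ι : Type*} (t : Finset ι) (A : ι → MSet α)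
    (hA : (t : Set ι).PairwiseDisjoint fun i => (A i : Set α)) :
    (P ⟨⋃ i ∈ t, A i, t.measurableSet_biUnion fun i _ => (A i).2⟩ : ℝ) =
      ∑ i ∈ t, (P (A i) : ℝ) := by
  classical
  induction t using Finset.induction_on with
  | empty => simpa using hP.apply_empty
  | insert a t ha ih =>
    rw [Finset.coe_insert, pairwiseDisjoint_insert_of_notMem (by simpa using ha)] at hA
    have hdisj : Disjoint (A a : Set α) (⋃ i ∈ t, A i) := disjoint_iUnion₂_right.2 hA.2
    simp only [Finset.set_biUnion_insert]
    rw [Finset.sum_insert ha, ← ih hA.1]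
    exact hP.2 (A a) ⟨_, _⟩ hdisj

theorem IsFAP.sum_apply_fiber (hP : IsFAP P) {β : Type*} (s : SimpleFunc α β) :
    ∑ y ∈ s.range, (P ⟨s ⁻¹' {y}, s.measurableSet_fiber y⟩ : ℝ) = 1 := by
  have hcover : ⋃ y ∈ s.range, s ⁻¹' {y} = univ :=
    eq_univ_of_forall fun x => mem_biUnion (s.mem_range_self x) rfl
  rw [← hP.apply_biUnion_finset s.range fun y => ⟨s ⁻¹' {y}, s.measurableSet_fiber y⟩]
  · simpa only [hcover] using hP.1
  · exact pairwiseDisjoint_fiber s _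

theorem IsFAP.simpleInt_le (hP : IsFAP P) {s : SimpleFunc α ℝ} {b : ℝ} (hs : ∀ x, s x ≤ b) :
    simpleInt P s ≤ b :=
  calc simpleInt P s
      ≤ ∑ y ∈ s.range, b * (P ⟨s ⁻¹' {y}, s.measurableSet_fiber y⟩ : ℝ) := by
        refine Finset.sum_le_sum fun y hy => ?_
        obtain ⟨x, rfl⟩ := SimpleFunc.mem_range.1 hy
        exact mul_le_mul_of_nonneg_right (hs x) (P _).2.1
    _ = b := by rw [← Finset.mul_sum, hP.sum_apply_fiber, mul_one]

/-- The finitely additive probability obtained by restricting a probability measure to the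
measurable sets, with values in `[0, 1]`. -/
noncomputable def fapOfMeasure (ν : Measure α) [IsProbabilityMeasure ν] : MSet α → unitInterval :=
  fun A => ⟨ν.real A, measureReal_nonneg, measureReal_le_one⟩

theorem isFAP_fapOfMeasure (ν : Measure α) [IsProbabilityMeasure ν] : IsFAP (fapOfMeasure ν) :=
  ⟨probReal_univ, fun _ B h => measureReal_union h B.2⟩

end FinitelyAdditive

section Semicontinuity

variable {α : Type*} [MeasurableSpace α]

theorem continuous_coe_apply (A : MSet α) :
    Continuous fun P : MSet α → unitInterval => (P A : ℝ) :=
  continuous_subtype_val.comp (continuous_apply A)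

theorem isClosed_FAPs : IsClosed (FAPs α) := by
  simp only [FAPs, IsFAP, ofPred_and, ofPred_forall]
  refine (isClosed_eq (continuous_coe_apply _) continuous_const).inter ?_
  refine isClosed_iInter fun A => isClosed_iInter fun B => isClosed_iInter fun _ => ?_
  exact isClosed_eq (continuous_coe_apply _)
    ((continuous_coe_apply A).add (continuous_coe_apply B))

theorem continuous_simpleInt (s : SimpleFunc α ℝ) :
    Continuous fun P : MSet α → unitInterval => simpleInt P s :=
  continuous_finsetSum _ fun _ _ => continuous_const.mul (continuous_coe_apply _)

theorem lowerSemicontinuousOn_fapInt {f : α → ℝ} (hf : BddAbove (range f)) :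
    LowerSemicontinuousOn (fun P => fapInt P f) (FAPs α) := by
  obtain ⟨b, hb⟩ := hf
  simp only [fapInt, sSup_image']
  refine lowerSemicontinuousOn_ciSup (fun P hP => ⟨b, ?_⟩) fun s =>
    (continuous_simpleInt s.1).lowerSemicontinuous.lowerSemicontinuousOn _
  rintro _ ⟨s, rfl⟩
  exact IsFAP.simpleInt_le hP fun x => (s.2 x).trans (hb (mem_range_self x))

theorem lowerSemicontinuousOn_fapIntTop (c : α → ℝ≥0∞) :
    LowerSemicontinuousOn (fun P => fapIntTop P c) (FAPs α) := by
  refine lowerSemicontinuousOn_iSup fun k => ?_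
  have hbdd : BddAbove (range fun x => (c x ⊓ (k : ℝ≥0∞)).toReal) := by
    refine ⟨k, ?_⟩
    rintro _ ⟨x, rfl⟩
    exact toReal_mono (natCast_ne_top k) inf_le_right
  exact continuous_ofReal.comp_lowerSemicontinuousOn (lowerSemicontinuousOn_fapInt hbdd)
    ofReal_mono

theorem exists_min_couplings_general {K : Set (MSet α → unitInterval)} (hK : IsClosed K)
    (hne : K.Nonempty) (hfap : K ⊆ FAPs α) (c : α → ℝ≥0∞) :
    ∃ P ∈ K, fapIntTop P c = ⨅ Q ∈ K, fapIntTop Q c := by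
  obtain ⟨P, hP, hmin⟩ :=
    ((lowerSemicontinuousOn_fapIntTop c).mono hfap).exists_isMinOn hne hK.isCompact
  exact ⟨P, hP, le_antisymm (le_iInf₂ fun _ hQ => hmin hQ) (iInf₂_le P hP)⟩

end Semicontinuity

section Couplings

variable {n : ℕ} {Ω : Fin n → Type*} [∀ i, MeasurableSpace (Ω i)]

theorem isClosed_couplings (μ : ∀ i, Measure (Ω i)) : IsClosed (couplings μ) := by
  simp only [couplings, ofPred_and, ofPred_forall]
  refine isClosed_FAPs.inter ?_
  refine isClosed_iInter fun i => isClosed_iInter fun B => isClosed_iInter fun hB => ?_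
  exact isClosed_eq (continuous_coe_apply _) continuous_const

theorem fapOfMeasure_mem_couplings {μ : ∀ i, Measure (Ω i)} {ν : Measure (∀ i, Ω i)}
    [IsProbabilityMeasure ν] (hν : ∀ i, MeasurePreserving (fun ω => ω i) ν (μ i)) :
    fapOfMeasure ν ∈ couplings μ :=
  ⟨isFAP_fapOfMeasure ν, fun i _ hB => (hν i).measureReal_preimage hB.nullMeasurableSet⟩

theorem couplings_nonempty (μ : ∀ i, Measure (Ω i)) [∀ i, IsProbabilityMeasure (μ i)] :
    (couplings μ).Nonempty :=
  ⟨_, fapOfMeasure_mem_couplings (measurePreserving_eval μ)⟩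

end Couplings

/-- the Kantorovich infimum over finitely additive couplings is always
attained: there is `P ∈ M` with `P(c) = inf_{Q ∈ M} Q(c)`, with no further
assumptions on `c` or on the (probability) marginals. -/
theorem exists_min_couplings
    {n : ℕ} (hn : 0 < n) {Ω : Fin n → Type*} [∀ i, MeasurableSpace (Ω i)]
    (μ : ∀ i, Measure (Ω i)) [∀ i, IsProbabilityMeasure (μ i)]
    (c : (∀ i, Ω i) → ℝ≥0∞) (hc : Measurable c) :
    ∃ P ∈ couplings μ, fapIntTop P c = ⨅ Q ∈ couplings μ, fapIntTop Q c :=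
  exists_min_couplings_general (isClosed_couplings μ) (couplings_nonempty μ)
    (fun _ hP => hP.1) c

end FATransport
end

section
/- Let P* ∈ ℙ and 𝒰 = {Q ∈ ℙ : Q ≪ P*}. Then M ∩ 𝒰 ≠ ∅ if and only if Σ_{i=1}^n μ_i(f_i) ≥ inf_{Q ∈ 𝒰} Q(⊕_{i=1}^n f_i) whenever f_i is a bounded 𝒜_i-measurable real function for each i = 1,…,n (with the convention inf ∅ = ∞). -/
open MeasureTheory Set ENNReal

namespace FATransport

variable {n : ℕ} {Ω : Fin n → Type*} [∀ i, MeasurableSpace (Ω i)]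

/-- Condition (4.1) of the paper: `Σᵢ μᵢ(fᵢ) ≥ inf_{Q ∈ 𝒰} Q(⊕ᵢ fᵢ)` for all bounded
measurable `fᵢ : Ωᵢ → ℝ`. The infimum is taken in `EReal`, so that `inf ∅ = ∞` (and
the condition fails when `𝒰 = ∅`). -/
def DualCond (μ : ∀ i, Measure (Ω i))
    (U : Set (MSet (∀ i, Ω i) → unitInterval)) : Prop :=
  ∀ f : ∀ i, Ω i → ℝ, (∀ i, Measurable (f i)) → (∀ i, ∃ C, ∀ x, |f i x| ≤ C) →
    (⨅ Q ∈ U, ((fapInt Q (fun ω => ∑ i, f i (ω i)) : ℝ) : EReal)) ≤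
      ((∑ i, ∫ x, f i x ∂(μ i) : ℝ) : EReal)

end FATransport

/-!
Every set function `Q : 𝒜 → [0,1]` has a vector of marginal values `Q(πᵢ ∈ B)`, indexed by the pairs
`(i, B)` with `B ∈ 𝒜ᵢ`. If `𝒰` is a closed convex set of finitely additive probabilities, it is
compact by Tychonoff, so the marginal vectors of its elements form a compact convex subset of the
product space `ℝ^{(i, B)}`. If the vector `μᵢ(B)` is not in this subset, Hahn–Banach separates it
strictly by a continuous functional, which depends on finitely many coordinates only. Such a
functional is integration of a family of simple functions `fᵢ`, for which
`Σᵢ μᵢ(fᵢ) < inf_{Q ∈ 𝒰} Q(⊕ᵢ fᵢ)`. The set `{Q ∈ ℙ : Q ≪ P*}` is closed and convex.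
-/

namespace FATransport

section SimpleFunctions

variable {α : Type*} [MeasurableSpace α]

/-- The indicator function of a measurable set, as a simple function. -/
noncomputable def simpleIndicator (A : MSet α) : SimpleFunc α ℝ :=
  SimpleFunc.piecewise A.1 A.2 (SimpleFunc.const α 1) (SimpleFunc.const α 0)

theorem coe_simpleIndicator (A : MSet α) : ⇑(simpleIndicator A) = A.1.indicator 1 := by
  classical
  rw [simpleIndicator, SimpleFunc.coe_piecewise]
  exact piecewise_eq_indicator

theorem simpleFunc_linearMap_ext {M : Type*} [AddCommMonoid M] [Module ℝ M]
    {L L' : SimpleFunc α ℝ →ₗ[ℝ] M}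
    (h : ∀ A, L (simpleIndicator A) = L' (simpleIndicator A)) : L = L' := by
  ext s
  induction s using SimpleFunc.induction with
  | const c hA =>
    have piecewise_eq_smul : SimpleFunc.piecewise _ hA (SimpleFunc.const α c)
        (SimpleFunc.const α 0) = c • simpleIndicator ⟨_, hA⟩ := by
      ext x
      simp [simpleIndicator, piecewise]
    rw [piecewise_eq_smul, map_smul, map_smul, h]
  | add _ hs ht => rw [map_add, map_add, hs, ht]

/-- Precomposition of simple functions with a measurable map, as a linear map. -/
noncomputable def simpleCompLM {β : Type*} [MeasurableSpace β] (p : α → β) (hp : Measurable p) :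
    SimpleFunc β ℝ →ₗ[ℝ] SimpleFunc α ℝ where
  toFun g := g.comp p hp
  map_add' _ _ := rfl
  map_smul' _ _ := rfl

/-- The integral of simple functions against a finite measure, as a linear functional. -/
noncomputable def simpleIntegralLM (μ : Measure α) [IsFiniteMeasure μ] :
    SimpleFunc α ℝ →ₗ[ℝ] ℝ where
  toFun s := ∫ x, s x ∂μ
  map_add' s t := integral_add s.integrable_of_isFiniteMeasure t.integrable_of_isFiniteMeasure
  map_smul' c _ := integral_smul c _

theorem simpleIntegralLM_simpleIndicator (μ : Measure α) [IsFiniteMeasure μ] (A : MSet α) :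
    simpleIntegralLM μ (simpleIndicator A) = μ.real A.1 :=
  calc ∫ x, simpleIndicator A x ∂μ = ∫ x, A.1.indicator 1 x ∂μ := by rw [coe_simpleIndicator]
    _ = μ.real A.1 := integral_indicator_one A.2

theorem exists_simpleFunc_between_add {f : α → ℝ} (hf : Measurable f) {C : ℝ}
    (hC : ∀ x, |f x| ≤ C) {ε : ℝ} (hε : 0 < ε) :
    ∃ g : SimpleFunc α ℝ, ∀ x, f x ≤ g x ∧ g x ≤ f x + ε := by
  have hmeas : Measurable fun x => ⌈f x / ε⌉ * ε := by fun_prop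
  have hfin : (range fun x => ⌈f x / ε⌉ * ε).Finite := by
    refine ((finite_Icc ⌈-C / ε⌉ ⌈C / ε⌉).image fun k : ℤ => k * ε).subset ?_
    rintro _ ⟨x, rfl⟩
    obtain ⟨hlower, hupper⟩ := abs_le.1 (hC x)
    exact ⟨⌈f x / ε⌉, ⟨by gcongr, by gcongr⟩, rfl⟩
  refine ⟨⟨_, fun y => hmeas (measurableSet_singleton y), hfin⟩, fun x => ⟨?_, ?_⟩⟩
  · exact (div_le_iff₀ hε).1 (Int.le_ceil _)
  · calc ⌈f x / ε⌉ * ε ≤ (f x / ε + 1) * ε := by gcongr; exact (Int.ceil_lt_add_one _).le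
      _ = f x + ε := by field_simp

end SimpleFunctions

section FiniteAdditivity

variable {α : Type*} [MeasurableSpace α] {P : MSet α → unitInterval}

/-- The set function `A ↦ P(A) • id`, extended by `0` to nonmeasurable sets. It presents `simpleInt`
as an instance of Mathlib's `SimpleFunc.setToSimpleFunc`. -/
noncomputable def smulIdCLM (P : MSet α → unitInterval) (A : Set α) : ℝ →L[ℝ] ℝ :=
  open Classical in
  if h : MeasurableSet A then (P ⟨A, h⟩ : ℝ) • ContinuousLinearMap.id ℝ ℝ else 0

theorem smulIdCLM_apply {A : Set α} (hA : MeasurableSet A) (x : ℝ) :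
    smulIdCLM P A x = P ⟨A, hA⟩ * x := by
  simp [smulIdCLM, hA]

theorem simpleInt_eq_setToSimpleFunc (P : MSet α → unitInterval) (s : SimpleFunc α ℝ) :
    simpleInt P s = s.setToSimpleFunc (smulIdCLM P) :=
  Finset.sum_congr rfl fun y _ => by
    rw [smulIdCLM_apply (s.measurableSet_fiber y), mul_comm]

namespace IsFAP

-- For the zero measure, the finiteness and integrability hypotheses of the `setToSimpleFunc` lemmas
-- hold for all sets and functions.
theorem finMeasAdditive_smulIdCLM (hP : IsFAP P) :
    FinMeasAdditive (0 : Measure α) (smulIdCLM P) := by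
  intro A B hA hB _ _ hAB
  ext
  rw [_root_.add_apply, smulIdCLM_apply hA, smulIdCLM_apply hB,
    smulIdCLM_apply (hA.union hB), hP.2 ⟨A, hA⟩ ⟨B, hB⟩ hAB, add_mul]

/-- The integral of simple functions against a finitely additive probability, as a linear
functional. -/
noncomputable def simpleIntLM (hP : IsFAP P) : SimpleFunc α ℝ →ₗ[ℝ] ℝ where
  toFun := simpleInt P
  map_add' s t := by
    simpa only [simpleInt_eq_setToSimpleFunc] using SimpleFunc.setToSimpleFunc_add _
      hP.finMeasAdditive_smulIdCLM integrable_zero_measure integrable_zero_measure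
  map_smul' c s := by
    simpa only [simpleInt_eq_setToSimpleFunc, RingHom.id_apply] using
      SimpleFunc.setToSimpleFunc_smul_real _ hP.finMeasAdditive_smulIdCLM c integrable_zero_measure

theorem simpleIntLM_simpleIndicator (hP : IsFAP P) (A : MSet α) :
    hP.simpleIntLM (simpleIndicator A) = P A := by
  have map_empty := hP.finMeasAdditive_smulIdCLM.map_empty_eq_zero
  calc hP.simpleIntLM (simpleIndicator A)
      = (simpleIndicator A).setToSimpleFunc (smulIdCLM P) := simpleInt_eq_setToSimpleFunc P _
    _ = smulIdCLM P A.1 1 := SimpleFunc.setToSimpleFunc_indicator _ map_empty A.2 1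
    _ = P A := by rw [smulIdCLM_apply A.2, mul_one]

theorem simpleInt_mono (hP : IsFAP P) {s t : SimpleFunc α ℝ} (hst : s ≤ t) :
    simpleInt P s ≤ simpleInt P t := by
  rw [simpleInt_eq_setToSimpleFunc, simpleInt_eq_setToSimpleFunc]
  refine SimpleFunc.setToSimpleFunc_mono hP.finMeasAdditive_smulIdCLM (fun A hA _ x hx => ?_)
    integrable_zero_measure integrable_zero_measure hst
  rw [smulIdCLM_apply hA]
  exact mul_nonneg (P _).2.1 hx

theorem fapInt_coe_simpleFunc (hP : IsFAP P) (s : SimpleFunc α ℝ) :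
    fapInt P s = simpleInt P s :=
  IsGreatest.csSup_eq ⟨mem_image_of_mem _ fun _ => le_rfl,
    forall_mem_image.2 fun _ hts => hP.simpleInt_mono hts⟩

theorem fapInt_le_simpleInt (hP : IsFAP P) {f : α → ℝ} {s t : SimpleFunc α ℝ}
    (hs : ∀ x, s x ≤ f x) (ht : ∀ x, f x ≤ t x) : fapInt P f ≤ simpleInt P t :=
  csSup_le ⟨_, mem_image_of_mem _ hs⟩ <| forall_mem_image.2 fun _ hrf =>
    hP.simpleInt_mono fun x => (hrf x).trans (ht x)

end IsFAP

end FiniteAdditivity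

section ClosedConvex

variable {α : Type*} [MeasurableSpace α]

/-- The embedding of `[0,1]^𝒜` into the vector space `ℝ^𝒜`, in which convexity makes sense. -/
def realValues (P : MSet α → unitInterval) (A : MSet α) : ℝ := P A

theorem continuous_realValues : Continuous (realValues (α := α)) := by
  unfold realValues
  fun_prop

theorem isClosed_setOf_isFAP_and_fapAC (Pstar : MSet α → unitInterval) :
    IsClosed {Q | IsFAP Q ∧ FapAC Q Pstar} := by
  have continuous_eval (A : MSet α) : Continuous fun Q : MSet α → unitInterval => (Q A : ℝ) := by
    fun_prop
  simp only [IsFAP, FapAC, ofPred_and, ofPred_forall]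
  refine .inter (.inter ?_ ?_) ?_
  · exact isClosed_eq (continuous_eval _) continuous_const
  · exact isClosed_iInter fun A => isClosed_iInter fun B => isClosed_iInter fun _ =>
      isClosed_eq (continuous_eval _) ((continuous_eval A).add (continuous_eval B))
  · exact isClosed_iInter fun A => isClosed_iInter fun _ =>
      isClosed_eq (continuous_eval A) continuous_const

theorem convex_realValues_image_setOf_isFAP_and_fapAC (Pstar : MSet α → unitInterval) :
    Convex ℝ (realValues '' {Q | IsFAP Q ∧ FapAC Q Pstar}) := by
  rintro _ ⟨P, ⟨hP, hPac⟩, rfl⟩ _ ⟨Q, ⟨hQ, hQac⟩, rfl⟩ a b ha hb hab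
  let R : MSet α → unitInterval := fun A =>
    ⟨a • (P A : ℝ) + b • (Q A : ℝ), convex_Icc 0 1 (P A).2 (Q A).2 ha hb hab⟩
  have hR (A : MSet α) : (R A : ℝ) = a * P A + b * Q A := rfl
  refine ⟨R, ⟨⟨?_, fun A B hAB => ?_⟩, fun A hA => ?_⟩, rfl⟩
  · rw [hR, hP.1, hQ.1, mul_one, mul_one, hab]
  · rw [hR, hR, hR, hP.2 A B hAB, hQ.2 A B hAB]
    ring
  · rw [hR, hPac A hA, hQac A hA, mul_zero, mul_zero, add_zero]

end ClosedConvex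

section Separation

variable {ι : Type*}

theorem exists_finsupp_linearCombination_eq (φ : StrongDual ℝ (ι → ℝ)) :
    ∃ c : ι →₀ ℝ, ∀ x, φ x = Finsupp.linearCombination ℝ x c := by
  have hspan : φ.toLinearMap ∈
      Submodule.span ℝ (range (LinearMap.proj : ι → (ι → ℝ) →ₗ[ℝ] ℝ)) :=
    (LinearMap.mem_span_iff_continuous _).2 φ.continuous
  obtain ⟨c, hc⟩ := Finsupp.mem_span_range_iff_exists_finsupp.1 hspan
  refine ⟨c, fun x => ?_⟩
  rw [← ContinuousLinearMap.coe_coe, ← hc]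
  simp [Finsupp.linearCombination_apply, Finsupp.sum]

theorem exists_linearCombination_lt_of_notMem {s : Set (ι → ℝ)} (hconv : Convex ℝ s)
    (hclosed : IsClosed s) {x : ι → ℝ} (hx : x ∉ s) :
    ∃ (c : ι →₀ ℝ) (u : ℝ), Finsupp.linearCombination ℝ x c < u ∧
      ∀ y ∈ s, u < Finsupp.linearCombination ℝ y c := by
  obtain ⟨φ, u, hxu, hus⟩ := geometric_hahn_banach_point_closed hconv hclosed hx
  obtain ⟨c, hc⟩ := exists_finsupp_linearCombination_eq φ
  exact ⟨c, u, hc x ▸ hxu, fun y hy => hc y ▸ hus y hy⟩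

end Separation

section Product

variable {ι : Type*} {Ω : ι → Type*} [∀ i, MeasurableSpace (Ω i)]

/-- The cylinder `{πᵢ ∈ B}` with `B ∈ 𝒜ᵢ`. The values of a set function on cylinders are the values
of its marginals. -/
def cylinderSet (j : Σ i, MSet (Ω i)) : MSet (∀ i, Ω i) :=
  ⟨(fun ω => ω j.1) ⁻¹' j.2.1, measurable_pi_apply j.1 j.2.2⟩

theorem pi_simpleFunc_linearMap_ext [Finite ι] [DecidableEq ι] {M : Type*} [AddCommMonoid M]
    [Module ℝ M] {L L' : (∀ i, SimpleFunc (Ω i) ℝ) →ₗ[ℝ] M}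
    (h : ∀ i B, L (Pi.single i (simpleIndicator B)) = L' (Pi.single i (simpleIndicator B))) :
    L = L' :=
  LinearMap.pi_ext' fun i => simpleFunc_linearMap_ext (h i)

variable [Fintype ι] [DecidableEq ι]

/-- The map `(gᵢ) ↦ ⊕ᵢ gᵢ` on families of simple functions. -/
noncomputable def simpleOplus :
    (∀ i, SimpleFunc (Ω i) ℝ) →ₗ[ℝ] SimpleFunc (∀ i, Ω i) ℝ :=
  LinearMap.lsum ℝ _ ℝ fun i => simpleCompLM (fun ω => ω i) (measurable_pi_apply i)

theorem simpleOplus_apply (g : ∀ i, SimpleFunc (Ω i) ℝ) (ω : ∀ i, Ω i) :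
    simpleOplus g ω = ∑ i, g i (ω i) := by
  let evalLM : SimpleFunc (∀ i, Ω i) ℝ →ₗ[ℝ] ℝ := ⟨⟨fun s => s ω, fun _ _ => rfl⟩, fun _ _ => rfl⟩
  rw [simpleOplus, LinearMap.lsum_apply, LinearMap.sum_apply]
  exact map_sum evalLM _ _

theorem simpleOplus_single_simpleIndicator (i : ι) (B : MSet (Ω i)) :
    simpleOplus (Pi.single i (simpleIndicator B)) = simpleIndicator (cylinderSet ⟨i, B⟩) := by
  rw [simpleOplus, LinearMap.lsum_piSingle]
  rfl

theorem IsFAP.simpleIntLM_simpleOplus_single {P : MSet (∀ i, Ω i) → unitInterval} (hP : IsFAP P)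
    (i : ι) (B : MSet (Ω i)) :
    hP.simpleIntLM (simpleOplus (Pi.single i (simpleIndicator B))) = P (cylinderSet ⟨i, B⟩) := by
  rw [simpleOplus_single_simpleIndicator, hP.simpleIntLM_simpleIndicator]

/-- The functional `(gᵢ) ↦ Σᵢ μᵢ(gᵢ)` on families of simple functions. -/
noncomputable def sumIntegralLM (μ : ∀ i, Measure (Ω i)) [∀ i, IsFiniteMeasure (μ i)] :
    (∀ i, SimpleFunc (Ω i) ℝ) →ₗ[ℝ] ℝ :=
  LinearMap.lsum ℝ _ ℝ fun i => simpleIntegralLM (μ i)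

theorem sumIntegralLM_apply (μ : ∀ i, Measure (Ω i)) [∀ i, IsFiniteMeasure (μ i)]
    (g : ∀ i, SimpleFunc (Ω i) ℝ) : sumIntegralLM μ g = ∑ i, ∫ x, g i x ∂μ i := by
  rw [sumIntegralLM, LinearMap.lsum_apply, LinearMap.sum_apply]
  rfl

theorem sumIntegralLM_single_simpleIndicator (μ : ∀ i, Measure (Ω i))
    [∀ i, IsFiniteMeasure (μ i)] (i : ι) (B : MSet (Ω i)) :
    sumIntegralLM μ (Pi.single i (simpleIndicator B)) = (μ i).real B.1 := by
  rw [sumIntegralLM, LinearMap.lsum_piSingle, simpleIntegralLM_simpleIndicator]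

end Product

section Couplings

open Filter Topology

variable {n : ℕ} {Ω : Fin n → Type*} [∀ i, MeasurableSpace (Ω i)] {μ : ∀ i, Measure (Ω i)}
  {P : MSet (∀ i, Ω i) → unitInterval}

theorem mem_couplings_iff :
    P ∈ couplings μ ↔
      IsFAP P ∧ realValues P ∘ cylinderSet = fun j => (μ j.1).real j.2.1 := by
  simp only [couplings, funext_iff, Sigma.forall, Subtype.forall]
  rfl

variable [∀ i, IsFiniteMeasure (μ i)]

theorem simpleInt_simpleOplus_of_mem_couplings (hP : P ∈ couplings μ)
    (g : ∀ i, SimpleFunc (Ω i) ℝ) : simpleInt P (simpleOplus g) = ∑ i, ∫ x, g i x ∂μ i := by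
  suffices hP.1.simpleIntLM ∘ₗ simpleOplus = sumIntegralLM μ from
    (LinearMap.congr_fun this g).trans (sumIntegralLM_apply μ g)
  refine pi_simpleFunc_linearMap_ext fun i B => ?_
  rw [LinearMap.comp_apply, hP.1.simpleIntLM_simpleOplus_single,
    sumIntegralLM_single_simpleIndicator]
  exact hP.2 i B.1 B.2

theorem fapInt_sum_le_sum_integral_add (hP : P ∈ couplings μ) {f : ∀ i, Ω i → ℝ}
    (hf : ∀ i, Measurable (f i)) (hbdd : ∀ i, ∃ C, ∀ x, |f i x| ≤ C) {ε : ℝ} (hε : 0 < ε) :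
    fapInt P (fun ω => ∑ i, f i (ω i)) ≤ ∑ i, (∫ x, f i x ∂μ i + (μ i).real univ * ε) := by
  choose C hC using hbdd
  choose g hfg hgf using fun i => exists_simpleFunc_between_add (hf i) (hC i) hε
  have lower (ω : ∀ i, Ω i) :
      simpleOplus (fun i => g i - SimpleFunc.const _ ε) ω ≤ ∑ i, f i (ω i) := by
    rw [simpleOplus_apply]
    exact Finset.sum_le_sum fun i _ => sub_le_iff_le_add.2 (hgf i (ω i))
  have upper (ω : ∀ i, Ω i) : ∑ i, f i (ω i) ≤ simpleOplus g ω := by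
    rw [simpleOplus_apply]
    exact Finset.sum_le_sum fun i _ => hfg i (ω i)
  have integral_le (i : Fin n) : ∫ x, g i x ∂μ i ≤ ∫ x, f i x ∂μ i + (μ i).real univ * ε := by
    have hf_int : Integrable (f i) (μ i) :=
      .of_bound (hf i).aestronglyMeasurable (C i) (.of_forall (hC i))
    calc ∫ x, g i x ∂μ i ≤ ∫ x, (f i x + ε) ∂μ i :=
          integral_mono (g i).integrable_of_isFiniteMeasure
            (hf_int.add (integrable_const ε)) (hgf i)
      _ = ∫ x, f i x ∂μ i + (μ i).real univ * ε := by
          rw [integral_add hf_int (integrable_const ε), integral_const, smul_eq_mul]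
  calc fapInt P (fun ω => ∑ i, f i (ω i))
      ≤ simpleInt P (simpleOplus g) := hP.1.fapInt_le_simpleInt lower upper
    _ = ∑ i, ∫ x, g i x ∂μ i := simpleInt_simpleOplus_of_mem_couplings hP g
    _ ≤ ∑ i, (∫ x, f i x ∂μ i + (μ i).real univ * ε) :=
        Finset.sum_le_sum fun i _ => integral_le i

theorem fapInt_sum_le_sum_integral (hP : P ∈ couplings μ) {f : ∀ i, Ω i → ℝ}
    (hf : ∀ i, Measurable (f i)) (hbdd : ∀ i, ∃ C, ∀ x, |f i x| ≤ C) :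
    fapInt P (fun ω => ∑ i, f i (ω i)) ≤ ∑ i, ∫ x, f i x ∂μ i := by
  have bound_tendsto : Tendsto (fun ε => ∑ i, (∫ x, f i x ∂μ i + (μ i).real univ * ε)) (𝓝[>] 0)
      (𝓝 (∑ i, ∫ x, f i x ∂μ i)) :=
    (Continuous.tendsto' (by fun_prop) 0 _ (by simp)).mono_left nhdsWithin_le_nhds
  exact ge_of_tendsto bound_tendsto <| eventually_mem_nhdsWithin.mono fun ε hε =>
    fapInt_sum_le_sum_integral_add hP hf hbdd hε

theorem exists_simpleFunc_sum_integral_lt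
    {U : Set (MSet (∀ i, Ω i) → unitInterval)} (hU : U ⊆ FAPs (∀ i, Ω i)) (hclosed : IsClosed U)
    (hconv : Convex ℝ (realValues '' U)) (hempty : ¬(couplings μ ∩ U).Nonempty) :
    ∃ (g : ∀ i, SimpleFunc (Ω i) ℝ) (u : ℝ), ∑ i, ∫ x, g i x ∂μ i < u ∧
      ∀ Q ∈ U, u < simpleInt Q (simpleOplus g) := by
  let marginals := LinearMap.funLeft ℝ ℝ (cylinderSet (Ω := Ω))
  have hclosed_marginals : IsClosed (marginals '' (realValues '' U)) := by
    have continuous_marginals : Continuous marginals :=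
      continuous_pi fun j => continuous_apply (cylinderSet j)
    exact ((hclosed.isCompact.image continuous_realValues).image continuous_marginals).isClosed
  have hμ_notMem : (fun j => (μ j.1).real j.2.1) ∉ marginals '' (realValues '' U) := by
    rintro ⟨_, ⟨Q, hQ, rfl⟩, hQμ⟩
    exact hempty ⟨Q, mem_couplings_iff.2 ⟨hU hQ, hQμ⟩, hQ⟩
  obtain ⟨c, u, hμu, huU⟩ := exists_linearCombination_lt_of_notMem
    (hconv.linear_image marginals) hclosed_marginals hμ_notMem
  refine ⟨Finsupp.linearCombination ℝ (fun j => Pi.single j.1 (simpleIndicator j.2)) c, u,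
    ?_, fun Q hQ => ?_⟩
  · rw [← sumIntegralLM_apply, Finsupp.apply_linearCombination]
    simpa only [Function.comp_def, sumIntegralLM_single_simpleIndicator] using hμu
  · have hQ_fap : IsFAP Q := hU hQ
    have pairing_eq := Finsupp.apply_linearCombination ℝ (hQ_fap.simpleIntLM ∘ₗ simpleOplus)
      (fun j => Pi.single j.1 (simpleIndicator j.2)) c
    simp only [Function.comp_def, LinearMap.comp_apply,
      hQ_fap.simpleIntLM_simpleOplus_single] at pairing_eq
    exact (huU _ (mem_image_of_mem _ (mem_image_of_mem _ hQ))).trans_eq pairing_eq.symm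

end Couplings

theorem nonempty_iff_dualCond_ac_general
    {n : ℕ} {Ω : Fin n → Type*} [∀ i, MeasurableSpace (Ω i)]
    (μ : ∀ i, Measure (Ω i)) [∀ i, IsFiniteMeasure (μ i)]
    {U : Set (MSet (∀ i, Ω i) → unitInterval)} (hU : U ⊆ FAPs (∀ i, Ω i))
    (hclosed : IsClosed U) (hconv : Convex ℝ (realValues '' U)) :
    (couplings μ ∩ U).Nonempty ↔ DualCond μ U := by
  refine ⟨fun ⟨P, hPμ, hPU⟩ f hf hbdd => ?_, fun hdual => ?_⟩
  · exact (iInf₂_le P hPU).trans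
      (EReal.coe_le_coe_iff.2 (fapInt_sum_le_sum_integral hPμ hf hbdd))
  · by_contra hempty
    obtain ⟨g, u, hgu, hug⟩ := exists_simpleFunc_sum_integral_lt hU hclosed hconv hempty
    have inf_le := hdual (fun i => g i) (fun i => (g i).measurable)
      fun i => (g i).exists_forall_norm_le
    have le_inf : (u : EReal) ≤ ⨅ Q ∈ U, ((fapInt Q fun ω => ∑ i, g i (ω i) : ℝ) : EReal) := by
      refine le_iInf₂ fun Q hQ => EReal.coe_le_coe_iff.2 ?_
      simp only [← simpleOplus_apply]
      exact (hug Q hQ).le.trans_eq ((hU hQ).fapInt_coe_simpleFunc _).symm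
    exact hgu.not_ge (EReal.coe_le_coe_iff.1 (le_inf.trans inf_le))

/-- for `P* ∈ ℙ` and `𝒰 = {Q ∈ ℙ : Q ≪ P*}`, one has `M ∩ 𝒰 ≠ ∅` iff
`Σᵢ μᵢ(fᵢ) ≥ inf_{Q ∈ 𝒰} Q(⊕ᵢ fᵢ)` for all bounded measurable `fᵢ` (with `inf ∅ = ∞`). -/
theorem nonempty_iff_dualCond_ac
    {n : ℕ} (hn : 0 < n) {Ω : Fin n → Type*} [∀ i, MeasurableSpace (Ω i)]
    (μ : ∀ i, Measure (Ω i)) [∀ i, IsProbabilityMeasure (μ i)]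
    (Pstar : MSet (∀ i, Ω i) → unitInterval) (hPstar : IsFAP Pstar) :
    (couplings μ ∩ {Q | IsFAP Q ∧ FapAC Q Pstar}).Nonempty ↔
      DualCond μ {Q | IsFAP Q ∧ FapAC Q Pstar} :=
  nonempty_iff_dualCond_ac_general μ (fun _ hQ => hQ.1) (isClosed_setOf_isFAP_and_fapAC Pstar)
    (convex_realValues_image_setOf_isFAP_and_fapAC Pstar)

end FATransport
end
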